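/- Let A ∈ ℝ^{m×n}, y ∈ ℝ^m, let x* and x^p be k-sparse vectors in ℝⁿ and set η = y − Ax*. Let q ≥ 2k be a positive integer, set t = ⌈q/k⌉, and let δ₁ ≤ δ₂ ≤ δ₃ be restricted isometry constants of orders k, 2k, 3k for A. Let u^p = x^p + h^p, where h^p is a hard thresholding of Aᵀ(y − Ax^p) at level q. Then ‖x* − u^p‖₂ ≤ ((√5+1)/2)(t+1)δ₃·‖x* − x^p‖₂ + ((√5+1)/2)(t+1)√(1+δ₂)·‖η‖₂. -/

import Mathlib

/-!
Put `v = xs - xp`, which is `2k`-sparse with support `S`, and `z = Aᵀ (A v + η)`, so that `h` is a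
hard thresholding of `z` at level `q ≥ |S|`. The bound combines two estimates.

* Thresholding (`thresholding_bound`): the golden ratio `φ = (√5 + 1) / 2` satisfies
  `‖v - h‖ ≤ φ ‖(v - z)_{S ∪ Ω}‖`. Indeed the entries of `z` on `S \ Ω` are dominated by those on
  `Ω \ S`, where `v` vanishes, and `φ²` is the largest eigenvalue of the quadratic form
  `b² + (b + c)²` that results.
* Restricted isometry (`block_bound`): on a block `T` with at most `k` elements, and on `T = S`,
  `v - z = (I - AᵀA) v - Aᵀ η` has norm at most `δ₃ ‖v‖ + √(1 + δ₂) ‖η‖`, by duality and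
  polarization.

The set `S ∪ Ω` is `S` together with at most `t = ⌈q / k⌉` blocks of size at most `k`, which gives
the factor `t + 1`.
-/

open Matrix Finset Filter

/-- Euclidean (ℓ₂) norm of a vector. -/
noncomputable def nrm {n : ℕ} (x : Fin n → ℝ) : ℝ := Real.sqrt (∑ i, x i ^ 2)

/-- A vector is `s`-sparse if it has at most `s` nonzero entries. -/
def sparse {n : ℕ} (s : ℕ) (x : Fin n → ℝ) : Prop :=
  ((Finset.univ : Finset (Fin n)).filter fun i => x i ≠ 0).card ≤ s

/-- Support of a vector, as a finset. -/
noncomputable def suppF {n : ℕ} (x : Fin n → ℝ) : Finset (Fin n) :=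
  (Finset.univ : Finset (Fin n)).filter fun i => x i ≠ 0

/-- Restriction of a vector to an index set (zero outside). -/
def restr {n : ℕ} (x : Fin n → ℝ) (Ω : Finset (Fin n)) : Fin n → ℝ :=
  fun i => if i ∈ Ω then x i else 0

/-- `δ ∈ [0,1)` is a restricted isometry constant of order `s` for `A`. -/
def RIC {m n : ℕ} (A : Matrix (Fin m) (Fin n) ℝ) (s : ℕ) (δ : ℝ) : Prop :=
  0 ≤ δ ∧ δ < 1 ∧ ∀ x : Fin n → ℝ, sparse s x →
    (1 - δ) * nrm x ^ 2 ≤ nrm (A.mulVec x) ^ 2 ∧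
      nrm (A.mulVec x) ^ 2 ≤ (1 + δ) * nrm x ^ 2

/-- `h` is a hard thresholding of `z` at level `q` with support `Ω`. -/
def IsHT {n : ℕ} (q : ℕ) (z h : Fin n → ℝ) (Ω : Finset (Fin n)) : Prop :=
  Ω.card = q ∧ (∀ i ∈ Ω, h i = z i) ∧ (∀ i ∉ Ω, h i = 0) ∧
    ∀ i ∈ Ω, ∀ j ∉ Ω, |z j| ≤ |z i|

/-! ### Euclidean norm and restriction -/

lemma nrm_eq_norm {n : ℕ} (x : Fin n → ℝ) : nrm x = ‖WithLp.toLp 2 x‖ := by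
  simp [nrm, EuclideanSpace.norm_eq]

lemma nrm_nonneg {n : ℕ} (x : Fin n → ℝ) : 0 ≤ nrm x := Real.sqrt_nonneg _

lemma nrm_sq {n : ℕ} (x : Fin n → ℝ) : nrm x ^ 2 = x ⬝ᵥ x := by
  rw [nrm, Real.sq_sqrt (Finset.sum_nonneg fun i _ => sq_nonneg _)]
  simp [dotProduct, sq]

lemma nrm_add_le {n : ℕ} (x y : Fin n → ℝ) : nrm (x + y) ≤ nrm x + nrm y := by
  simp only [nrm_eq_norm, WithLp.toLp_add]
  exact norm_add_le _ _

lemma abs_dot_le {n : ℕ} (x y : Fin n → ℝ) : |x ⬝ᵥ y| ≤ nrm x * nrm y := by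
  have := abs_real_inner_le_norm (WithLp.toLp 2 y) (WithLp.toLp 2 x)
  rw [← nrm_eq_norm, ← nrm_eq_norm, EuclideanSpace.inner_toLp_toLp] at this
  simpa [mul_comm] using this

lemma restr_sq {n : ℕ} (x : Fin n → ℝ) (U : Finset (Fin n)) :
    nrm (restr x U) ^ 2 = ∑ i ∈ U, x i ^ 2 := by
  rw [nrm, Real.sq_sqrt (Finset.sum_nonneg fun i _ => sq_nonneg _)]
  simp [restr, ite_pow]

lemma restr_dot {n : ℕ} (x : Fin n → ℝ) (U : Finset (Fin n)) :
    restr x U ⬝ᵥ x = nrm (restr x U) ^ 2 := by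
  rw [restr_sq]
  simp [restr, dotProduct, sq]

lemma sparse_of_support {n s : ℕ} {x : Fin n → ℝ} (U : Finset (Fin n)) (hU : U.card ≤ s)
    (hx : ∀ i ∉ U, x i = 0) : sparse s x := by
  refine le_trans (Finset.card_le_card ?_) hU
  intro i hi
  by_contra h
  exact (Finset.mem_filter.1 hi).2 (hx i h)

/-! ### Restricted isometry -/

/-- A restricted isometry almost preserves inner products of vectors with a common small support:
this is polarization, applied to `‖v‖ • u` and `‖u‖ • v`, which have equal norms. -/
lemma ric_dot {m n s : ℕ} {A : Matrix (Fin m) (Fin n) ℝ} {δ : ℝ} (hA : RIC A s δ)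
    (U : Finset (Fin n)) (hU : U.card ≤ s) (u v : Fin n → ℝ)
    (hu : ∀ i ∉ U, u i = 0) (hv : ∀ i ∉ U, v i = 0) :
    u ⬝ᵥ v - A.mulVec u ⬝ᵥ A.mulVec v ≤ δ * (nrm u * nrm v) := by
  obtain ⟨hδ, -, hR⟩ := hA
  have key : ∀ a b : ℝ, 4 * (a * b) * (u ⬝ᵥ v - A.mulVec u ⬝ᵥ A.mulVec v) ≤
      2 * δ * (a ^ 2 * nrm u ^ 2 + b ^ 2 * nrm v ^ 2) := by
    intro a b
    have e1 := (hR (a • u + b • v) (sparse_of_support U hU fun i hi => by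
      simp [hu i hi, hv i hi])).1
    have e2 := (hR (a • u - b • v) (sparse_of_support U hU fun i hi => by
      simp [hu i hi, hv i hi])).2
    simp only [nrm_sq, mulVec_add, mulVec_sub, mulVec_smul, dotProduct_add, add_dotProduct,
      sub_dotProduct, dotProduct_sub, smul_dotProduct, dotProduct_smul, smul_eq_mul] at e1 e2 ⊢
    rw [dotProduct_comm v u, dotProduct_comm (A.mulVec v) (A.mulVec u)] at e1 e2
    linarith
  have z0 : ∀ x : Fin n → ℝ, nrm x = 0 → x = 0 := by
    intro x hx
    rw [nrm_eq_norm, norm_eq_zero] at hx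
    simpa using hx
  rcases (nrm_nonneg u).eq_or_lt with h0 | h0
  · rw [z0 u h0.symm]; simp [nrm]
  rcases (nrm_nonneg v).eq_or_lt with h1 | h1
  · rw [z0 v h1.symm]; simp [nrm]
  have hk := key (nrm v) (nrm u)
  have hp : 0 < nrm u * nrm v := mul_pos h0 h1
  refine le_of_mul_le_mul_left ?_ hp
  linarith

/-- The residual `(I - AᵀA) v - Aᵀ η` restricted to `T` has small norm as soon as `T` together with
the support of `v` is small. Its squared norm is its inner product with its own restriction `w`,
that is, `⟨w, v⟩ - ⟨A w, A v⟩ - ⟨A w, η⟩`. -/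
lemma block_bound {m n s r : ℕ} {A : Matrix (Fin m) (Fin n) ℝ} {δ ε : ℝ} (hA : RIC A s δ)
    (hB : RIC A r ε) (S T : Finset (Fin n)) (hST : (S ∪ T).card ≤ s) (hT : T.card ≤ r)
    (v : Fin n → ℝ) (hv : ∀ i ∉ S, v i = 0) (η : Fin m → ℝ) :
    nrm (restr (v - Aᵀ.mulVec (A.mulVec v + η)) T) ≤
      δ * nrm v + Real.sqrt (1 + ε) * nrm η := by
  set g := v - Aᵀ.mulVec (A.mulVec v + η) with hg
  set w := restr g T with hw
  have hwT : ∀ i ∉ T, w i = 0 := fun i hi => by simp [hw, restr, hi]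
  have adj : ∀ x : Fin m → ℝ, w ⬝ᵥ Aᵀ.mulVec x = A.mulVec w ⬝ᵥ x := by
    intro x
    rw [dotProduct_mulVec, vecMul_transpose]
  have e : nrm w ^ 2 = (w ⬝ᵥ v - A.mulVec w ⬝ᵥ A.mulVec v) - A.mulVec w ⬝ᵥ η := by
    rw [hw, ← restr_dot, ← hw]
    conv_lhs => rw [hg]
    rw [dotProduct_sub, adj, dotProduct_add]
    ring
  have e1 := ric_dot hA (S ∪ T) hST w v (fun i hi => hwT i fun h => hi (by simp [h]))
    (fun i hi => hv i fun h => hi (by simp [h]))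
  have e2 := (abs_le.1 (abs_dot_le (A.mulVec w) η)).1
  have e3 : nrm (A.mulVec w) ≤ Real.sqrt (1 + ε) * nrm w := by
    have h4 := (hB.2.2 w (sparse_of_support T hT hwT)).2
    have hε : 0 ≤ 1 + ε := by linarith [hB.1]
    refine (sq_le_sq₀ (nrm_nonneg _) (mul_nonneg (Real.sqrt_nonneg _) (nrm_nonneg _))).1 ?_
    rw [mul_pow, Real.sq_sqrt hε]
    exact h4
  have e4 := mul_le_mul_of_nonneg_right e3 (nrm_nonneg η)
  rcases (nrm_nonneg w).eq_or_lt with h0 | h0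
  · rw [← h0]
    have := mul_nonneg hA.1 (nrm_nonneg v)
    have := mul_nonneg (Real.sqrt_nonneg (1 + ε)) (nrm_nonneg η)
    linarith
  · refine le_of_mul_le_mul_left ?_ h0
    linarith

/-! ### Cutting an index set into blocks -/

lemma restr_union {n : ℕ} (g : Fin n → ℝ) (U V : Finset (Fin n)) (hUV : Disjoint U V) :
    nrm (restr g (U ∪ V)) ≤ nrm (restr g U) + nrm (restr g V) := by
  have : restr g (U ∪ V) = restr g U + restr g V := by
    ext i
    by_cases h1 : i ∈ U
    · simp [restr, h1, Finset.disjoint_left.1 hUV h1]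
    · simp [restr, h1]
  rw [this]
  exact nrm_add_le _ _

/-- A uniform bound on blocks of size at most `k` gives `j` times this bound on sets of size at most
`j * k`, by cutting such a set into `j` blocks. -/
lemma blocks_bound {n k : ℕ} {g : Fin n → ℝ} {C : ℝ}
    (hC : ∀ T : Finset (Fin n), T.card ≤ k → nrm (restr g T) ≤ C) (j : ℕ) :
    ∀ U : Finset (Fin n), U.card ≤ j * k → nrm (restr g U) ≤ j * C := by
  induction j with
  | zero =>
    intro U hU
    have : U = ∅ := by simpa using hU
    subst this
    simp [restr, nrm]
  | succ j ih =>
    intro U hU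
    obtain ⟨T, hT, hc⟩ := Finset.exists_subset_card_eq (min_le_right k U.card)
    have h1 := hC T (by omega)
    have h2 := ih (U \ T) (by
      rw [Finset.card_sdiff_of_subset hT, hc]
      rw [add_mul, one_mul] at hU
      omega)
    have h3 := restr_union g T (U \ T) Finset.disjoint_sdiff
    rw [Finset.union_sdiff_of_subset hT] at h3
    push_cast
    linarith

/-! ### Hard thresholding -/

/-- If every entry over `V` dominates every entry over `U` and `|U| ≤ |V|`, then the energy over `V`
dominates the energy over `U`. -/
lemma sum_le_of_dominated {n : ℕ} (z : Fin n → ℝ) (U V : Finset (Fin n)) (hc : U.card ≤ V.card)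
    (hd : ∀ i ∈ V, ∀ j ∈ U, |z j| ≤ |z i|) : ∑ j ∈ U, z j ^ 2 ≤ ∑ i ∈ V, z i ^ 2 := by
  obtain ⟨W, hW, hWc⟩ := Finset.exists_subset_card_eq hc
  refine le_trans ?_ (Finset.sum_le_sum_of_subset_of_nonneg hW fun i _ _ => sq_nonneg (z i))
  let e := Finset.equivOfCardEq hWc.symm
  rw [← Finset.sum_coe_sort U, ← Finset.sum_coe_sort W, ← e.sum_comp]
  exact Finset.sum_le_sum fun i _ => sq_le_sq.2 (hd _ (hW (e i).2) _ i.2)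

/-- Hard thresholding at a level at least the sparsity of `v` loses at most a golden-ratio factor
over the error of `z` on the union of the two supports. -/
lemma thresholding_bound {n q : ℕ} (v z h : Fin n → ℝ) (S Ω : Finset (Fin n)) (hS : S.card ≤ q)
    (hv : ∀ i ∉ S, v i = 0) (hHT : IsHT q z h Ω) :
    nrm (v - h) ≤ (Real.sqrt 5 + 1) / 2 * nrm (restr (v - z) (S ∪ Ω)) := by
  obtain ⟨hc, hin, hout, hdom⟩ := hHT
  set φ : ℝ := (Real.sqrt 5 + 1) / 2 with hφ
  have h5 : Real.sqrt 5 ^ 2 = 5 := Real.sq_sqrt (by norm_num)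
  have h5' : 1 ≤ Real.sqrt 5 := by rw [Real.one_le_sqrt]; norm_num
  have hφ2 : φ ^ 2 = φ + 1 := by rw [hφ]; linarith
  have hφ1 : 1 ≤ φ := by rw [hφ]; linarith
  set g := v - z with hg
  set b := nrm (restr z (Ω \ S)) with hb
  set c := nrm (restr g (S \ Ω)) with hcdef
  set d := nrm (restr v (S \ Ω)) with hd
  have hcard : (S \ Ω).card ≤ (Ω \ S).card := by
    have := Finset.card_sdiff_add_card_inter S Ω
    have := Finset.card_sdiff_add_card_inter Ω S
    rw [Finset.inter_comm] at this
    omega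
  have hzb : nrm (restr z (S \ Ω)) ≤ b := by
    refine (sq_le_sq₀ (nrm_nonneg _) (nrm_nonneg _)).1 ?_
    rw [restr_sq, restr_sq]
    exact sum_le_of_dominated z _ _ hcard fun i hi j hj =>
      hdom i (Finset.mem_sdiff.1 hi).1 j (Finset.mem_sdiff.1 hj).2
  have hdbc : d ≤ c + b := by
    have : restr v (S \ Ω) = restr g (S \ Ω) + restr z (S \ Ω) := by
      ext i
      by_cases hi : i ∈ S \ Ω <;> simp only [restr, hi, hg, Pi.add_apply, Pi.sub_apply] <;> simp
    have h1 := nrm_add_le (restr g (S \ Ω)) (restr z (S \ Ω))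
    rw [← this] at h1
    linarith
  have hgb : ∑ i ∈ Ω \ S, g i ^ 2 = b ^ 2 := by
    rw [hb, restr_sq]
    refine Finset.sum_congr rfl fun i hi => ?_
    simp [hg, hv i (Finset.mem_sdiff.1 hi).2]
  have hΩ : ∑ i ∈ Ω, g i ^ 2 = ∑ i ∈ Ω ∩ S, g i ^ 2 + b ^ 2 := by
    rw [← hgb, Finset.sum_inter_add_sum_sdiff]
  have hU : nrm (restr g (S ∪ Ω)) ^ 2 = ∑ i ∈ Ω ∩ S, g i ^ 2 + b ^ 2 + c ^ 2 := by
    rw [restr_sq, ← hΩ, hcdef, restr_sq, ← Finset.sdiff_union_self_eq_union,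
      Finset.sum_union Finset.sdiff_disjoint, add_comm]
  have hL : nrm (v - h) ^ 2 = ∑ i ∈ Ω ∩ S, g i ^ 2 + b ^ 2 + d ^ 2 := by
    have : v - h = restr (v - h) (S ∪ Ω) := by
      ext i
      by_cases h1 : i ∈ S ∪ Ω
      · simp only [restr, h1, if_true]
      · have h2 : i ∉ S ∧ i ∉ Ω := by simpa using h1
        simp [restr, h2, hv i h2.1, hout i h2.2]
    rw [this, restr_sq, ← hΩ, hd, restr_sq, ← Finset.sdiff_union_self_eq_union,
      Finset.sum_union Finset.sdiff_disjoint, add_comm]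
    congr 1
    · exact Finset.sum_congr rfl fun i hi => by simp [hg, hin i hi]
    · exact Finset.sum_congr rfl fun i hi => by simp [hout i (Finset.mem_sdiff.1 hi).2]
  have ha : 0 ≤ ∑ i ∈ Ω ∩ S, g i ^ 2 := Finset.sum_nonneg fun i _ => sq_nonneg _
  refine (sq_le_sq₀ (nrm_nonneg _) (mul_nonneg (by linarith) (nrm_nonneg _))).1 ?_
  rw [mul_pow, hU, hL, hφ2]
  have hd2 : d ^ 2 ≤ (c + b) ^ 2 := pow_le_pow_left₀ (nrm_nonneg _) hdbc 2
  -- `φ² (b² + c²) - b² - (b + c)² = (φ - 1) (b - φ c)²`, because `φ (φ - 1) = 1`.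
  have hsq : (φ + 1) * (b ^ 2 + c ^ 2) - b ^ 2 - (c + b) ^ 2 = (φ - 1) * (b - φ * c) ^ 2 := by
    linear_combination (2 * b * c - c ^ 2 * φ) * hφ2
  have hpos : 0 ≤ (φ - 1) * (b - φ * c) ^ 2 := mul_nonneg (by linarith) (sq_nonneg _)
  have hφa : 0 ≤ φ * ∑ i ∈ Ω ∩ S, g i ^ 2 := mul_nonneg (by linarith) ha
  linarith

/-! ### The error bound -/

theorem stmt14 {m n : ℕ} (k q : ℕ) (hk : 0 < k) (hq : 2 * k ≤ q)
    (A : Matrix (Fin m) (Fin n) ℝ) (y : Fin m → ℝ)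
    (xs xp : Fin n → ℝ) (hxs : sparse k xs) (hxp : sparse k xp)
    (η : Fin m → ℝ) (hη : η = y - A.mulVec xs)
    (t : ℕ) (ht : t = ⌈(q : ℝ) / (k : ℝ)⌉₊)
    (δ₁ δ₂ δ₃ : ℝ) (h1 : RIC A k δ₁) (h2 : RIC A (2 * k) δ₂) (h3 : RIC A (3 * k) δ₃)
    (h12 : δ₁ ≤ δ₂) (h23 : δ₂ ≤ δ₃)
    (h : Fin n → ℝ) (Ω : Finset (Fin n))
    (hHT : IsHT q (Aᵀ.mulVec (y - A.mulVec xp)) h Ω) :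
    nrm (xs - (xp + h)) ≤
      (Real.sqrt 5 + 1) / 2 * ((t : ℝ) + 1) * δ₃ * nrm (xs - xp) +
        (Real.sqrt 5 + 1) / 2 * ((t : ℝ) + 1) * Real.sqrt (1 + δ₂) * nrm η := by
  have hkR : (0 : ℝ) < k := by exact_mod_cast hk
  set v := xs - xp with hvdef
  set S := suppF xs ∪ suppF xp with hS
  have hv : ∀ i ∉ S, v i = 0 := by
    intro i hi
    have h' : xs i = 0 ∧ xp i = 0 := by simpa [hS, suppF] using hi
    simp [hvdef, h'.1, h'.2]
  have hSc : S.card ≤ 2 * k := by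
    refine (Finset.card_union_le _ _).trans ?_
    have e1 : (suppF xs).card ≤ k := hxs
    have e2 : (suppF xp).card ≤ k := hxp
    omega
  have hz : y - A.mulVec xp = A.mulVec v + η := by
    rw [hη, hvdef, mulVec_sub]
    abel
  rw [hz] at hHT
  have hthr := thresholding_bound v _ h S Ω (hSc.trans hq) hv hHT
  set g := v - Aᵀ.mulVec (A.mulVec v + η) with hg
  set C := δ₃ * nrm v + Real.sqrt (1 + δ₂) * nrm η with hC
  have hCS : nrm (restr g S) ≤ C :=
    block_bound h3 h2 S S (by rw [Finset.union_self]; omega) hSc v hv η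
  have hCT : ∀ T : Finset (Fin n), T.card ≤ k → nrm (restr g T) ≤ C := fun T hT =>
    block_bound h3 h2 S T ((Finset.card_union_le _ _).trans (by omega)) (by omega) v hv η
  have hqt : q ≤ t * k := by
    have := Nat.le_ceil ((q : ℝ) / k)
    rw [← ht, div_le_iff₀ hkR] at this
    exact_mod_cast this
  have hCΩ := blocks_bound hCT t (Ω \ S)
    ((Finset.card_le_card Finset.sdiff_subset).trans (hHT.1.le.trans hqt))
  have hun := restr_union g S (Ω \ S) Finset.disjoint_sdiff
  rw [Finset.union_sdiff_self_eq_union] at hun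
  have hφ : 0 ≤ (Real.sqrt 5 + 1) / 2 := by positivity
  have hfin := mul_le_mul_of_nonneg_left (hun.trans (add_le_add hCS hCΩ)) hφ
  have he : xs - (xp + h) = v - h := by rw [hvdef, sub_add_eq_sub_sub]
  rw [he]
  refine (hthr.trans hfin).trans (le_of_eq ?_)
  rw [hC]
  ring
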